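/- Let k > 1 be an integer and let α be a complex number with Re α > 0 and ζ(α) = 0, where ζ is the Riemann zeta function. Then the partial sums satisfy ∑_{n ≤ x} g_k(n)/n^α = O(x^{−Re α}), i.e., there is a constant C such that |∑_{n ≤ x} g_k(n)/n^α| ≤ C x^{−Re α} for all x ≥ 1. -/

import Mathlib

open Filter Finset

/-- `f` is a multiplicative arithmetical function: `f 1 = 1` and
`f (m*n) = f m * f n` whenever `gcd m n = 1`. -/
def IsMultFn (f : ℕ → ℂ) : Prop :=
  f 1 = 1 ∧ ∀ m n : ℕ, Nat.Coprime m n → f (m * n) = f m * f n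

/-- The series `∑_{k=0}^∞ g k` converges (in the sense of partial sums) to `L`. -/
def SeriesTendsTo (g : ℕ → ℂ) (L : ℂ) : Prop :=
  Filter.Tendsto (fun N => ∑ k ∈ Finset.range N, g k) Filter.atTop (nhds L)

/-- `f` is an MO function: multiplicative, `∑_{n=1}^∞ f n = 0`, and for each prime `p`
the series `∑_{k=0}^∞ f (p^k)` converges to a nonzero value. -/
def IsMO (f : ℕ → ℂ) : Prop :=
  IsMultFn f ∧ SeriesTendsTo (fun n => f (n + 1)) 0 ∧
    ∀ p : ℕ, p.Prime → ∃ L : ℂ, L ≠ 0 ∧ SeriesTendsTo (fun k => f (p ^ k)) L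

/-- For `k > 1`, `gk k n = 1 - k` if `k ∣ n` and `1` otherwise. -/
noncomputable def gk (k : ℕ) (n : ℕ) : ℂ := if k ∣ n then 1 - (k : ℂ) else 1

/-! If the summatory function `S(t) = ∑_{n ≤ t} f n` is at most `C t ^ r` in norm, summation by
parts turns the Dirichlet series `∑ f n / n ^ s` into `s ∫₁^∞ S(t) t ^ (-s - 1) dt`, which is
holomorphic for `r < Re s`, and the error at height `x` is
`S(x) x ^ (-s) - s ∫ₓ^∞ S(t) t ^ (-s - 1) dt`, of size `O(x ^ (r - Re s))`. For `f = g_k` the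
summatory function is `⌊t⌋ mod k`, so one may take `r = 0`. For `1 < Re s` the series is
`(1 - k ^ (1 - s)) ζ(s)`; multiplying by `s - 1` removes the pole, and the identity theorem extends
this to `0 < Re s`. So at a zero `α` of `ζ` the partial sums themselves are `O(x ^ (-Re α))`. -/

open MeasureTheory Topology

section Summatory

/-- The summatory function `t ↦ ∑_{1 ≤ n ≤ t} f n` of `f`; the value `f 0` does not enter. -/
noncomputable def summatory (f : ℕ → ℂ) (t : ℝ) : ℂ := ∑ n ∈ Icc 1 ⌊t⌋₊, f n

/-- The integral `s ∫₁^∞ S(t) t ^ (-(s + 1)) dt`, where `S` is the summatory function of `f`. It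
continues the Dirichlet series `∑ f n / n ^ s` to the half-plane `r < Re s` when `S(t) = O(t ^ r)`
with `0 ≤ r`. -/
noncomputable def dirichletIntegral (f : ℕ → ℂ) (s : ℂ) : ℂ :=
  s * ∫ t in Set.Ioi (1 : ℝ), summatory f t * (t : ℂ) ^ (-(s + 1))

variable {f : ℕ → ℂ} {C r : ℝ} {s : ℂ}

lemma summatory_natCast (f : ℕ → ℂ) (n : ℕ) : summatory f n = ∑ i ∈ Icc 1 n, f i := by
  rw [summatory, Nat.floor_natCast]

lemma summatory_of_lt_one (f : ℕ → ℂ) {t : ℝ} (ht : t < 1) : summatory f t = 0 := by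
  simp [summatory, Nat.floor_eq_zero.mpr ht]

lemma locallyIntegrableOn_summatory (f : ℕ → ℂ) :
    LocallyIntegrableOn (summatory f) (Set.Ioi 0) := by
  have h := locallyIntegrableOn_mul_sum_Icc (𝕜 := ℂ) f (m := 1) le_rfl (g := fun _ ↦ 1)
    (locallyIntegrableOn_const 1)
  simp only [one_mul] at h
  exact h.mono_set Set.Ioi_subset_Ici_self

lemma isBigO_summatory_atTop (hf : ∀ t ≥ 1, ‖summatory f t‖ ≤ C * t ^ r) :
    summatory f =O[atTop] fun t : ℝ ↦ t ^ r := by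
  refine .of_bound C ?_
  filter_upwards [eventually_ge_atTop 1] with t ht
  rw [Real.norm_of_nonneg (by positivity)]
  exact hf t ht

lemma isBigO_summatory_nhdsGT_zero (f : ℕ → ℂ) (g : ℝ → ℝ) : summatory f =O[𝓝[>] 0] g := by
  refine .of_bound 0 ?_
  filter_upwards [mem_nhdsWithin_of_mem_nhds (Iio_mem_nhds one_pos)] with t ht
  simp [summatory_of_lt_one f ht]

lemma dirichletIntegral_eq_mul_mellin (f : ℕ → ℂ) (s : ℂ) :
    dirichletIntegral f s = s * mellin (summatory f) (-s) := by
  have integrand_eq (t : ℝ) :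
      (t : ℂ) ^ (-s - 1) • summatory f t = summatory f t * (t : ℂ) ^ (-(s + 1)) := by
    rw [smul_eq_mul, mul_comm, neg_add']
  rw [dirichletIntegral, mellin, ← integral_Ici_eq_integral_Ioi]
  simp_rw [integrand_eq]
  congr 1
  refine (setIntegral_eq_of_subset_of_forall_sdiff_eq_zero measurableSet_Ioi
    (fun t ht ↦ one_pos.trans_le ht) fun t ht ↦ ?_).symm
  rw [summatory_of_lt_one f (not_le.mp ht.2), zero_mul]

lemma differentiableAt_dirichletIntegral (hf : ∀ t ≥ 1, ‖summatory f t‖ ≤ C * t ^ r)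
    (hs : r < s.re) : DifferentiableAt ℂ (dirichletIntegral f) s := by
  have mellin_differentiable : DifferentiableAt ℂ (mellin (summatory f)) (-s) :=
    mellin_differentiableAt_of_isBigO_rpow (a := -r) (b := -s.re - 1)
      (locallyIntegrableOn_summatory f) (by simpa using isBigO_summatory_atTop hf) (by simpa)
      (isBigO_summatory_nhdsGT_zero f _) (by simp)
  rw [funext (dirichletIntegral_eq_mul_mellin f)]
  exact differentiableAt_id.mul (mellin_differentiable.comp s differentiableAt_id.neg)

lemma LSeries_eq_dirichletIntegral (hf : ∀ t ≥ 1, ‖summatory f t‖ ≤ C * t ^ r) (hr : 0 ≤ r)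
    (hs : r < s.re) (hfs : LSeriesSummable f s) : LSeries f s = dirichletIntegral f s := by
  refine LSeries_eq_mul_integral f hr hs hfs ?_
  simpa only [Function.comp_def, summatory_natCast] using
    (isBigO_summatory_atTop hf).comp_tendsto tendsto_natCast_atTop_atTop

lemma norm_summatory_mul_cpow_le (hf : ∀ t ≥ 1, ‖summatory f t‖ ≤ C * t ^ r) {t : ℝ} (ht : 1 ≤ t) :
    ‖summatory f t * (t : ℂ) ^ (-(s + 1))‖ ≤ C * t ^ (r - s.re - 1) := by
  have ht0 : 0 < t := one_pos.trans_le ht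
  calc ‖summatory f t * (t : ℂ) ^ (-(s + 1))‖
      = ‖summatory f t‖ * t ^ (-(s.re + 1)) := by
        rw [norm_mul, Complex.norm_cpow_eq_rpow_re_of_pos ht0, Complex.neg_re, Complex.add_re,
          Complex.one_re]
    _ ≤ C * t ^ r * t ^ (-(s.re + 1)) := by gcongr; exact hf t ht
    _ = C * t ^ (r - s.re - 1) := by
        rw [mul_assoc, ← Real.rpow_add ht0]; ring_nf

lemma integrableOn_summatory_mul_cpow (hf : ∀ t ≥ 1, ‖summatory f t‖ ≤ C * t ^ r)
    (hs : r < s.re) :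
    IntegrableOn (fun t : ℝ ↦ summatory f t * (t : ℂ) ^ (-(s + 1))) (Set.Ioi 1) := by
  have majorant : IntegrableOn (fun t : ℝ ↦ C * t ^ (r - s.re - 1)) (Set.Ioi 1) :=
    (integrableOn_Ioi_rpow_of_lt (by linarith) one_pos).const_mul C
  have measurable : AEStronglyMeasurable (fun t : ℝ ↦ summatory f t * (t : ℂ) ^ (-(s + 1)))
      (volume.restrict (Set.Ioi 1)) :=
    ((locallyIntegrableOn_summatory f).aestronglyMeasurable.mono_set
      (Set.Ioi_subset_Ioi zero_le_one)).mul
        (Complex.measurable_ofReal.pow_const _).aestronglyMeasurable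
  refine majorant.mono' measurable ?_
  filter_upwards [ae_restrict_mem measurableSet_Ioi] with t ht
  exact norm_summatory_mul_cpow_le hf (le_of_lt ht)

lemma norm_integral_Ioi_summatory_mul_cpow_le (hf : ∀ t ≥ 1, ‖summatory f t‖ ≤ C * t ^ r)
    (hs : r < s.re) {x : ℝ} (hx : 1 ≤ x) :
    ‖∫ t in Set.Ioi x, summatory f t * (t : ℂ) ^ (-(s + 1))‖ ≤
      C / (s.re - r) * x ^ (r - s.re) := by
  have hx0 : 0 < x := one_pos.trans_le hx
  have exponent_lt : r - s.re - 1 < -1 := by linarith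
  calc ‖∫ t in Set.Ioi x, summatory f t * (t : ℂ) ^ (-(s + 1))‖
      ≤ ∫ t in Set.Ioi x, C * t ^ (r - s.re - 1) := by
        refine norm_integral_le_of_norm_le
          ((integrableOn_Ioi_rpow_of_lt exponent_lt hx0).const_mul C) ?_
        filter_upwards [ae_restrict_mem measurableSet_Ioi] with t ht
        exact norm_summatory_mul_cpow_le hf (hx.trans (le_of_lt ht))
    _ = C / (s.re - r) * x ^ (r - s.re) := by
        rw [integral_const_mul, integral_Ioi_rpow_of_lt exponent_lt hx0, sub_add_cancel,
          ← neg_sub s.re r, neg_div_neg_eq]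
        ring

lemma hasDerivAt_ofReal_cpow_neg (s : ℂ) {t : ℝ} (ht : t ≠ 0) :
    HasDerivAt (fun u : ℝ ↦ (u : ℂ) ^ (-s)) (-s * (t : ℂ) ^ (-(s + 1))) t := by
  obtain rfl | hs := eq_or_ne s 0
  · simpa using hasDerivAt_const t (1 : ℂ)
  · simpa only [neg_add'] using hasDerivAt_ofReal_cpow_const ht (neg_ne_zero.mpr hs)

lemma sum_Icc_zero_mul_update_zero {R : Type*} [NonUnitalNonAssocSemiring R] (w f : ℕ → R) (n : ℕ) :
    ∑ i ∈ Icc 0 n, w i * Function.update f 0 0 i = ∑ i ∈ Icc 1 n, w i * f i := by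
  rw [← insert_Icc_add_one_left_eq_Icc n.zero_le, sum_insert (by simp), Function.update_self,
    mul_zero, zero_add]
  refine sum_congr rfl fun i hi ↦ ?_
  rw [Function.update_of_ne (Nat.one_le_iff_ne_zero.mp (mem_Icc.mp hi).1)]

lemma sum_div_cpow_eq_add_integral (f : ℕ → ℂ) (s : ℂ) (x : ℝ) :
    ∑ n ∈ Icc 1 ⌊x⌋₊, f n / (n : ℂ) ^ s =
      (x : ℂ) ^ (-s) * summatory f x +
        s * ∫ t in Set.Ioc 1 x, summatory f t * (t : ℂ) ^ (-(s + 1)) := by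
  have deriv_eq {t : ℝ} (ht : 1 ≤ t) := hasDerivAt_ofReal_cpow_neg s (one_pos.trans_le ht).ne'
  have deriv_integrable :
      IntegrableOn (deriv fun u : ℝ ↦ (u : ℂ) ^ (-s)) (Set.Icc 1 x) := by
    have continuous : ContinuousOn (fun t : ℝ ↦ -s * (t : ℂ) ^ (-(s + 1))) (Set.Icc 1 x) :=
      fun t ht ↦ (continuousAt_const.mul <| Complex.continuousAt_ofReal_cpow_const _ _
        (.inr (one_pos.trans_le ht.1).ne')).continuousWithinAt
    exact continuous.integrableOn_Icc.congr_fun (fun t ht ↦ (deriv_eq ht.1).deriv.symm)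
      measurableSet_Icc
  -- Mathlib's summation by parts starts at `0`, so `f` is replaced by `Function.update f 0 0`.
  have sum_update (n : ℕ) : ∑ i ∈ Icc 0 n, Function.update f 0 0 i = ∑ i ∈ Icc 1 n, f i := by
    simpa only [Pi.one_apply, one_mul] using sum_Icc_zero_mul_update_zero 1 f n
  have by_parts := sum_mul_eq_sub_integral_mul₀ (f := fun t : ℝ ↦ (t : ℂ) ^ (-s))
    (Function.update f 0 0) (Function.update_self ..) x
    (fun t ht ↦ (deriv_eq ht.1).differentiableAt) deriv_integrable
  simp only [sum_Icc_zero_mul_update_zero (fun n ↦ ((n : ℝ) : ℂ) ^ (-s)), sum_update] at by_parts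
  calc ∑ n ∈ Icc 1 ⌊x⌋₊, f n / (n : ℂ) ^ s
      = ∑ n ∈ Icc 1 ⌊x⌋₊, ((n : ℝ) : ℂ) ^ (-s) * f n := by
        simp only [Complex.ofReal_natCast, Complex.cpow_neg, div_eq_inv_mul]
    _ = _ := by
        rw [by_parts, sub_eq_add_neg, ← integral_neg, ← integral_const_mul]
        refine congrArg₂ _ rfl (setIntegral_congr_fun measurableSet_Ioc fun t ht ↦ ?_)
        rw [(deriv_eq ht.1.le).deriv, summatory]
        ring

lemma sum_div_cpow_sub_dirichletIntegral (hf : ∀ t ≥ 1, ‖summatory f t‖ ≤ C * t ^ r)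
    (hs : r < s.re) {x : ℝ} (hx : 1 ≤ x) :
    ∑ n ∈ Icc 1 ⌊x⌋₊, f n / (n : ℂ) ^ s - dirichletIntegral f s =
      (x : ℂ) ^ (-s) * summatory f x -
        s * ∫ t in Set.Ioi x, summatory f t * (t : ℂ) ^ (-(s + 1)) := by
  have integrable := integrableOn_summatory_mul_cpow hf hs
  rw [sum_div_cpow_eq_add_integral, dirichletIntegral, ← Set.Ioc_union_Ioi_eq_Ioi hx,
    setIntegral_union (Set.Ioc_disjoint_Ioi le_rfl) measurableSet_Ioi
      (integrable.mono_set Set.Ioc_subset_Ioi_self)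
      (integrable.mono_set (Set.Ioi_subset_Ioi hx))]
  ring

theorem norm_sum_div_cpow_sub_dirichletIntegral_le
    (hf : ∀ t ≥ 1, ‖summatory f t‖ ≤ C * t ^ r) (hs : r < s.re) {x : ℝ} (hx : 1 ≤ x) :
    ‖∑ n ∈ Icc 1 ⌊x⌋₊, f n / (n : ℂ) ^ s - dirichletIntegral f s‖ ≤
      C * (1 + ‖s‖ / (s.re - r)) * x ^ (r - s.re) := by
  have hx0 : 0 < x := one_pos.trans_le hx
  have boundary_term : ‖(x : ℂ) ^ (-s) * summatory f x‖ ≤ C * x ^ (r - s.re) := by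
    rw [norm_mul, Complex.norm_cpow_eq_rpow_re_of_pos hx0, Complex.neg_re, sub_eq_add_neg,
      Real.rpow_add hx0, ← mul_assoc, mul_comm]
    gcongr
    exact hf x hx
  calc ‖∑ n ∈ Icc 1 ⌊x⌋₊, f n / (n : ℂ) ^ s - dirichletIntegral f s‖
      ≤ ‖(x : ℂ) ^ (-s) * summatory f x‖ +
          ‖s‖ * ‖∫ t in Set.Ioi x, summatory f t * (t : ℂ) ^ (-(s + 1))‖ := by
        rw [sum_div_cpow_sub_dirichletIntegral hf hs hx, ← norm_mul]
        exact norm_sub_le _ _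
    _ ≤ C * x ^ (r - s.re) + ‖s‖ * (C / (s.re - r) * x ^ (r - s.re)) := by
        gcongr
        exact norm_integral_Ioi_summatory_mul_cpow_le hf hs hx
    _ = C * (1 + ‖s‖ / (s.re - r)) * x ^ (r - s.re) := by ring

end Summatory

lemma LSeriesHasSum_ite_dvd_div {f : ℕ → ℂ} {s a : ℂ} (hf : LSeriesHasSum f s a) {k : ℕ}
    (hk : k ≠ 0) :
    LSeriesHasSum (fun n ↦ if k ∣ n then f (n / k) else 0) s ((k : ℂ) ^ (-s) * a) := by
  have term_mul : LSeries.term (fun n ↦ if k ∣ n then f (n / k) else 0) s ∘ (k * ·) =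
      fun m ↦ (k : ℂ) ^ (-s) * LSeries.term f s m := by
    ext m
    obtain rfl | hm := eq_or_ne m 0
    · simp
    · simp only [Function.comp_apply]
      rw [LSeries.term_of_ne_zero (mul_ne_zero hk hm), LSeries.term_of_ne_zero hm,
        if_pos (dvd_mul_right k m), Nat.mul_div_cancel_left m (Nat.pos_of_ne_zero hk), Nat.cast_mul,
        Complex.natCast_mul_natCast_cpow, Complex.cpow_neg]
      ring
  have term_eq_zero (n : ℕ) (hn : n ∉ Set.range (k * ·)) :
      LSeries.term (fun n ↦ if k ∣ n then f (n / k) else 0) s n = 0 := by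
    have not_dvd : ¬ k ∣ n := fun ⟨m, hm⟩ ↦ hn ⟨m, hm.symm⟩
    simp [LSeries.term_def, not_dvd]
  rw [LSeriesHasSum, ← (mul_right_injective₀ hk).hasSum_iff term_eq_zero, term_mul]
  exact HasSum.mul_left _ hf

section gk

variable {k : ℕ} {s : ℂ}

lemma sum_Icc_gk (k n : ℕ) : ∑ i ∈ Icc 1 n, gk k i = (n % k : ℕ) := by
  suffices h : ∑ i ∈ Icc 1 n, gk k i = n - k * (n / k : ℕ) by
    rw [h, sub_eq_iff_eq_add]
    exact_mod_cast (Nat.mod_add_div n k).symm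
  induction n with
  | zero => simp
  | succ n ih =>
    rw [sum_Icc_succ_top n.succ_pos, ih, Nat.succ_div, gk]
    split_ifs <;> push_cast <;> ring

lemma norm_summatory_gk_le (hk : k ≠ 0) (t : ℝ) : ‖summatory (gk k) t‖ ≤ k := by
  rw [summatory, sum_Icc_gk, Complex.norm_natCast]
  exact_mod_cast (Nat.mod_lt _ (Nat.pos_of_ne_zero hk)).le

lemma LSeriesHasSum_gk (hk : k ≠ 0) (hs : 1 < s.re) :
    LSeriesHasSum (gk k) s ((1 - (k : ℂ) ^ (1 - s)) * riemannZeta s) := by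
  have gk_eq : gk k = 1 - (k : ℂ) • fun n ↦ if k ∣ n then (1 : ℕ → ℂ) (n / k) else 0 := by
    ext n
    by_cases h : k ∣ n <;> simp [gk, h]
  have hone := LSeriesHasSum_one hs
  rw [gk_eq]
  convert hone.sub ((LSeriesHasSum_ite_dvd_div hone hk).smul (k : ℂ)) using 1
  rw [sub_eq_add_neg 1 s, Complex.cpow_add _ _ (Nat.cast_ne_zero.mpr hk), Complex.cpow_one]
  ring

lemma sub_one_mul_dirichletIntegral_gk (hk : k ≠ 0) (hs : 0 < s.re) :
    (s - 1) * dirichletIntegral (gk k) s = (1 - (k : ℂ) ^ (1 - s)) * riemannZeta₁ s := by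
  have bound : ∀ t ≥ 1, ‖summatory (gk k) t‖ ≤ k * t ^ (0 : ℝ) := fun t _ ↦ by
    simpa using norm_summatory_gk_le hk t
  have isOpen_halfPlane (a : ℝ) : IsOpen {z : ℂ | a < z.re} :=
    isOpen_lt continuous_const Complex.continuous_re
  have lhs_analytic : AnalyticOnNhd ℂ (fun z ↦ (z - 1) * dirichletIntegral (gk k) z)
      {z | 0 < z.re} :=
    DifferentiableOn.analyticOnNhd (fun z hz ↦ ((differentiableAt_id.sub_const 1).mul
      (differentiableAt_dirichletIntegral bound hz)).differentiableWithinAt) (isOpen_halfPlane 0)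
  have rhs_analytic : AnalyticOnNhd ℂ (fun z ↦ (1 - (k : ℂ) ^ (1 - z)) * riemannZeta₁ z)
      {z | 0 < z.re} := by
    refine DifferentiableOn.analyticOnNhd (fun z _ ↦ ?_) (isOpen_halfPlane 0)
    refine (DifferentiableAt.mul ?_ differentiable_riemannZeta₁.differentiableAt)
      |>.differentiableWithinAt
    exact ((differentiableAt_id.const_sub 1).const_cpow
      (.inl (Nat.cast_ne_zero.mpr hk))).const_sub 1
  refine lhs_analytic.eqOn_of_preconnected_of_eventuallyEq rhs_analytic
    (convex_halfSpace_re_gt 0).isPreconnected (z₀ := 2) (by simp) ?_ hs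
  filter_upwards [(isOpen_halfPlane 1).mem_nhds (by simp : (1 : ℝ) < (2 : ℂ).re)] with z hz
  have hz1 : z ≠ 1 := by rintro rfl; simp at hz
  have hasSum := LSeriesHasSum_gk hk hz
  rw [← LSeries_eq_dirichletIntegral bound le_rfl (one_pos.trans hz) hasSum.LSeriesSummable,
    hasSum.LSeries_eq, riemannZeta_eq_inv_sub_mul hz1]
  field_simp [sub_ne_zero.mpr hz1]

lemma dirichletIntegral_gk (hk : k ≠ 0) (hs : 0 < s.re) (hs1 : s ≠ 1) :
    dirichletIntegral (gk k) s = (1 - (k : ℂ) ^ (1 - s)) * riemannZeta s := by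
  have h := sub_one_mul_dirichletIntegral_gk hk hs
  rw [riemannZeta_eq_inv_sub_mul hs1, mul_left_comm, ← h,
    inv_mul_cancel_left₀ (sub_ne_zero.mpr hs1)]

end gk

theorem stmt19_general (k : ℕ) (hk : k ≠ 0) (α : ℂ) (hα : 0 < α.re) (hα1 : α ≠ 1) (x : ℝ)
    (hx : 1 ≤ x) :
    ‖∑ n ∈ Icc 1 ⌊x⌋₊, gk k n / (n : ℂ) ^ α - (1 - (k : ℂ) ^ (1 - α)) * riemannZeta α‖ ≤
      k * (1 + ‖α‖ / α.re) * x ^ (-α.re) := by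
  have bound : ∀ t ≥ 1, ‖summatory (gk k) t‖ ≤ k * t ^ (0 : ℝ) := fun t _ ↦ by
    simpa using norm_summatory_gk_le hk t
  simpa [dirichletIntegral_gk hk hα hα1] using
    norm_sum_div_cpow_sub_dirichletIntegral_le bound hα hx

theorem stmt19 (k : ℕ) (hk : 1 < k) (α : ℂ) (hα : 0 < α.re) (hζ : riemannZeta α = 0) :
    ∃ C : ℝ, ∀ x : ℝ, 1 ≤ x →
      ‖∑ n ∈ Finset.Icc 1 ⌊x⌋₊, gk k n / (n : ℂ) ^ α‖ ≤ C * x ^ (-α.re) := by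
  have hα1 : α ≠ 1 := by rintro rfl; exact riemannZeta_one_ne_zero hζ
  exact ⟨_, fun x hx ↦ by simpa [hζ] using stmt19_general k (Nat.ne_zero_of_lt hk) α hα hα1 x hx⟩
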